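/- For all x < 0 and y < 0, lim_{n→∞} [P(ρ_{1n}|X| + √(1-ρ_{1n}²)·Y ≤ 1 + u_n·x, ρ_{2n}|X| + √(1-ρ_{2n}²)·Y ≤ 1 + u_n·y)]^n = exp(-2·I_α·(|x|^{1/2+α}·Υ_α((λ + (y-x)/(2λ))/√(2|x|)) + |y|^{1/2+α}·Υ_α((λ + (x-y)/(2λ))/√(2|y|)))) with λ = |λ₁ - λ₂|. -/

import Mathlib

open MeasureTheory Filter Real Set ProbabilityTheory Topology

noncomputable def Ialpha (α : ℝ) : ℝ :=
  (Real.sqrt (2 * Real.pi))⁻¹ * (Real.Gamma (α + 1) / Real.Gamma (α + 3 / 2))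

noncomputable def Upsilon (α t : ℝ) : ℝ :=
  (∫ s in Set.Icc (-1 : ℝ) (min t 1), (1 - s ^ 2) ^ α) /
    (∫ s in Set.Icc (-1 : ℝ) 1, (1 - s ^ 2) ^ α)

/-!
Write `Θ` for the angle and `1 - R` for the radial deficit. A row exceeds one of its two levels
exactly when `1 - R` is smaller than the maximum of two functions of `Θ` which, as `n → ∞`, are
concentrated on angles of order `√(u n)`, up to the symmetry `t ↦ π - t`, and have height of order
`u n`; after rescaling they become parabolic caps with apexes at `(2 lam₁, |x|)` and
`(2 lam₂, |y|)`. By independence the probability `qₙ` of such an exceedance is an average over `Θ`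
of the tail of `R`, so regular variation and dominated convergence give `n qₙ → π⁻¹ ∫ w ^ α`, where
`w` is the maximum of the two caps, and `(1 - qₙ) ^ n` converges to `exp (-π⁻¹ ∫ w ^ α)`. The
integral splits at the point where the caps cross, and each half is an incomplete beta integral.
-/

lemma integral_rpow_mul_one_sub_rpow {a b : ℝ} (ha : 0 < a) (hb : 0 < b) :
    ∫ t in (0 : ℝ)..1, t ^ (a - 1) * (1 - t) ^ (b - 1) = beta a b := by
  have h : Complex.betaIntegral a b =
      ((∫ t in (0 : ℝ)..1, t ^ (a - 1) * (1 - t) ^ (b - 1) : ℝ) : ℂ) := by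
    rw [Complex.betaIntegral, ← intervalIntegral.integral_ofReal]
    refine intervalIntegral.integral_congr fun t ht => ?_
    rw [uIcc_of_le zero_le_one] at ht
    simp only [Complex.ofReal_mul, Complex.ofReal_cpow ht.1,
      Complex.ofReal_cpow (sub_nonneg.2 ht.2), Complex.ofReal_sub, Complex.ofReal_one]
  rw [beta_eq_betaIntegralReal a b ha hb, h, Complex.ofReal_re]

lemma integral_one_sub_sq_rpow_eq_beta {a : ℝ} (ha : -1 < a) :
    ∫ s in Icc (-1 : ℝ) 1, (1 - s ^ 2) ^ a = 2 * 4 ^ a * beta (a + 1) (a + 1) := by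
  have ha' : 0 < a + 1 := by linarith
  have h_subst : ∫ t in (0 : ℝ)..1, (1 - (2 * t - 1) ^ 2) ^ a =
      2⁻¹ * ∫ s in (-1 : ℝ)..1, (1 - s ^ 2) ^ a := by
    rw [intervalIntegral.integral_comp_mul_sub (fun s : ℝ => (1 - s ^ 2) ^ a) two_ne_zero]
    norm_num
  have h_beta : ∫ t in (0 : ℝ)..1, (1 - (2 * t - 1) ^ 2) ^ a = 4 ^ a * beta (a + 1) (a + 1) := by
    rw [← integral_rpow_mul_one_sub_rpow ha' ha', add_sub_cancel_right,
      ← intervalIntegral.integral_const_mul]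
    refine intervalIntegral.integral_congr fun t ht => ?_
    rw [uIcc_of_le zero_le_one] at ht
    have ht' : 0 ≤ 1 - t := sub_nonneg.2 ht.2
    calc (1 - (2 * t - 1) ^ 2) ^ a = (4 * (t * (1 - t))) ^ a := by ring_nf
      _ = 4 ^ a * (t ^ a * (1 - t) ^ a) := by
        rw [mul_rpow (by norm_num) (mul_nonneg ht.1 ht'), mul_rpow ht.1 ht']
  rw [integral_Icc_eq_integral_Ioc, ← intervalIntegral.integral_of_le (by norm_num), mul_assoc,
    ← h_beta, h_subst, mul_inv_cancel_left₀ two_ne_zero]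

lemma integral_one_sub_sq_rpow {a : ℝ} (ha : -1 < a) :
    ∫ s in Icc (-1 : ℝ) 1, (1 - s ^ 2) ^ a = √π * Gamma (a + 1) / Gamma (a + 3 / 2) := by
  have h_duplication : Gamma (a + 1) * Gamma (a + 3 / 2) =
      Gamma (2 * (a + 1)) * 2 ^ (1 - 2 * (a + 1)) * √π := by
    rw [show a + 3 / 2 = a + 1 + 1 / 2 by ring]
    exact Gamma_mul_Gamma_add_half (a + 1)
  have h_pow : (4 : ℝ) ^ a * 2 ^ (1 - 2 * (a + 1)) = 1 / 2 := by
    rw [show (4 : ℝ) = 2 ^ (2 : ℝ) by norm_num, ← rpow_mul zero_le_two, ← rpow_add two_pos,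
      show 2 * a + (1 - 2 * (a + 1)) = -1 by ring, rpow_neg_one, one_div]
  have h_Gamma : Gamma (2 * (a + 1)) ≠ 0 := (Gamma_pos_of_pos (by linarith)).ne'
  have h_Gamma' : Gamma (a + 3 / 2) ≠ 0 := (Gamma_pos_of_pos (by linarith)).ne'
  rw [eq_div_iff h_Gamma']
  calc (∫ s in Icc (-1 : ℝ) 1, (1 - s ^ 2) ^ a) * Gamma (a + 3 / 2)
      = 2 * 4 ^ a / Gamma (2 * (a + 1)) * Gamma (a + 1)
          * (Gamma (a + 1) * Gamma (a + 3 / 2)) := by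
        rw [integral_one_sub_sq_rpow_eq_beta ha, beta, ← two_mul]
        ring
    _ = 2 * (4 ^ a * 2 ^ (1 - 2 * (a + 1))) * √π * Gamma (a + 1) := by
        rw [h_duplication]
        field_simp
    _ = √π * Gamma (a + 1) := by rw [h_pow]; ring

lemma sqrt_two_mul_integral_one_sub_sq_rpow {a : ℝ} (ha : -1 < a) :
    √2 * ∫ s in Icc (-1 : ℝ) 1, (1 - s ^ 2) ^ a = 2 * π * Ialpha a := by
  rw [integral_one_sub_sq_rpow ha, Ialpha, sqrt_mul zero_le_two]
  field_simp
  rw [sq_sqrt zero_le_two, sq_sqrt pi_pos.le]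
  ring_nf

lemma integral_Iic_max_one_sub_sq_rpow {a : ℝ} (ha : 0 < a) (t : ℝ) :
    ∫ s in Iic t, max (1 - s ^ 2) 0 ^ a = Upsilon a t * ∫ s in Icc (-1 : ℝ) 1, (1 - s ^ 2) ^ a := by
  have h_pos : ∫ s in Icc (-1 : ℝ) 1, (1 - s ^ 2) ^ a ≠ 0 := by
    rw [integral_one_sub_sq_rpow (by linarith)]
    have := Gamma_pos_of_pos (show 0 < a + 1 by linarith)
    have := Gamma_pos_of_pos (show 0 < a + 3 / 2 by linarith)
    positivity
  rw [Upsilon, div_mul_cancel₀ _ h_pos]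
  have h_subset : Icc (-1) (min t 1) ⊆ Iic t := fun s hs => hs.2.trans (min_le_left _ _)
  rw [setIntegral_eq_of_subset_of_forall_sdiff_eq_zero measurableSet_Iic h_subset]
  · refine setIntegral_congr_fun measurableSet_Icc fun s hs => ?_
    have : 0 ≤ 1 - s ^ 2 := by nlinarith [hs.1, hs.2.trans (min_le_right _ _)]
    simp only [max_eq_left this]
  · rintro s ⟨hst, hs⟩
    have hs' : 1 < |s| := by
      by_contra! h
      exact hs ⟨(abs_le.1 h).1, le_min hst (abs_le.1 h).2⟩
    have : 1 - s ^ 2 ≤ 0 := by linarith [(one_le_sq_iff_one_le_abs s).2 hs'.le]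
    rw [max_eq_right this, zero_rpow ha.ne']

/-- The positive part of the downward parabola with apex `(c, p)`, which is the rescaled profile of
the exceedances of a single margin. -/
noncomputable def parabolicCap (p c s : ℝ) : ℝ := max (p - (s - c) ^ 2 / 2) 0

lemma parabolicCap_nonneg (p c s : ℝ) : 0 ≤ parabolicCap p c s := le_max_right _ _

lemma parabolicCap_reflect (p c s : ℝ) : parabolicCap p c (2 * c - s) = parabolicCap p c s := by
  rw [parabolicCap, parabolicCap]
  ring_nf

lemma parabolicCap_add_sqrt_mul {p : ℝ} (hp : 0 ≤ p) (c s : ℝ) :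
    parabolicCap p c (c + √(2 * p) * s) = p * max (1 - s ^ 2) 0 := by
  rw [parabolicCap, add_sub_cancel_left, mul_pow, sq_sqrt (by positivity),
    mul_max_of_nonneg _ _ hp, mul_zero]
  ring_nf

lemma integral_Iic_parabolicCap_rpow {a p : ℝ} (ha : 0 < a) (hp : 0 < p) (c t : ℝ) :
    ∫ s in Iic t, parabolicCap p c s ^ a =
      2 * π * Ialpha a * (p ^ (1 / 2 + a) * Upsilon a ((t - c) / √(2 * p))) := by
  set k := √(2 * p) with hk
  have hk0 : 0 < k := by positivity
  have h_preimage : (fun s => c + k * s) ⁻¹' Iic t = Iic ((t - c) / k) := by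
    ext s
    rw [mem_preimage, mem_Iic, mem_Iic, le_div_iff₀' hk0, le_sub_iff_add_le']
  have h_subst : ∫ s in Iic t, parabolicCap p c s ^ a =
      k * ∫ s in Iic ((t - c) / k), parabolicCap p c (c + k * s) ^ a := by
    have h := Measure.integral_comp_mul_left
      (fun s => (Iic t).indicator (parabolicCap p c · ^ a) (c + s)) k
    rw [integral_add_left_eq_self, integral_indicator measurableSet_Iic, smul_eq_mul,
      abs_of_pos (inv_pos.2 hk0)] at h
    rw [← h_preimage, ← inv_mul_eq_iff_eq_mul₀ hk0.ne', ← h,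
      ← integral_indicator (measurableSet_Iic.preimage (by fun_prop))]
    rfl
  have h_cap : ∀ s, parabolicCap p c (c + k * s) ^ a = p ^ a * max (1 - s ^ 2) 0 ^ a := fun s => by
    rw [parabolicCap_add_sqrt_mul hp.le, mul_rpow hp.le (le_max_right _ _)]
  simp_rw [h_subst, h_cap]
  rw [integral_const_mul, integral_Iic_max_one_sub_sq_rpow ha,
    ← sqrt_two_mul_integral_one_sub_sq_rpow (by linarith), hk, sqrt_mul zero_le_two, rpow_add hp,
    ← sqrt_eq_rpow]
  ring

lemma integrable_parabolicCap_rpow {a : ℝ} (ha : 0 < a) (p c : ℝ) :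
    Integrable (fun s => parabolicCap p c s ^ a) := by
  have h_cont : Continuous fun s => parabolicCap p c s ^ a :=
    Continuous.rpow_const (by unfold parabolicCap; fun_prop) fun _ => Or.inr ha.le
  refine h_cont.integrable_of_hasCompactSupport
    (.of_support_subset_isCompact (isCompact_closedBall c √(2 * |p|)) fun s hs => ?_)
  rw [Metric.mem_closedBall, dist_eq]
  refine abs_le_sqrt ?_
  by_contra! h
  have : p - (s - c) ^ 2 / 2 ≤ 0 := by linarith [le_abs_self p]
  exact hs (by simp only [parabolicCap, max_eq_right this, zero_rpow ha.ne'])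

lemma integral_Ioi_eq_integral_Iic_of_reflect {E : Type*} [NormedAddCommGroup E] [NormedSpace ℝ E]
    {f : ℝ → E} {c : ℝ} (hf : ∀ s, f (2 * c - s) = f s) (t : ℝ) :
    ∫ s in Ioi t, f s = ∫ s in Iic (2 * c - t), f s := by
  rw [integral_Iic_eq_integral_Iio, ← preimage_const_sub_Ioi]
  rw [← integral_indicator measurableSet_Ioi,
    ← integral_sub_left_eq_self _ volume (2 * c),
    ← integral_indicator (measurableSet_Ioi.preimage (measurable_const_sub _))]
  congr with s
  simp only [indicator, mem_preimage, hf]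

lemma integral_max_parabolicCap_rpow_of_lt {a p q c d : ℝ} (ha : 0 < a) (hp : 0 < p) (hq : 0 < q)
    (hcd : c < d) :
    ∫ s, max (parabolicCap p c s) (parabolicCap q d s) ^ a = 2 * π * Ialpha a *
      (p ^ (1 / 2 + a) * Upsilon a (((d - c) / 2 + (p - q) / (d - c)) / √(2 * p)) +
        q ^ (1 / 2 + a) * Upsilon a (((d - c) / 2 + (q - p) / (d - c)) / √(2 * q))) := by
  have hδ : 0 < d - c := sub_pos.2 hcd
  -- `m` is the abscissa at which the two parabolas cross.
  set m := c + ((d - c) / 2 + (p - q) / (d - c)) with hm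
  have h_cross : (m - c) * (d - c) = (d - c) ^ 2 / 2 + (p - q) := by
    rw [hm]
    field_simp
    ring
  have h_left : EqOn (fun s => max (parabolicCap p c s) (parabolicCap q d s) ^ a)
      (parabolicCap p c · ^ a) (Iic m) := fun s hs => by
    have : q - (s - d) ^ 2 / 2 ≤ p - (s - c) ^ 2 / 2 := by
      nlinarith [mul_le_mul_of_nonneg_right (mem_Iic.1 hs) hδ.le]
    simp only [max_eq_left (max_le_max_right 0 this), parabolicCap]
  have h_right : EqOn (fun s => max (parabolicCap p c s) (parabolicCap q d s) ^ a)
      (parabolicCap q d · ^ a) (Ioi m) := fun s hs => by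
    have : p - (s - c) ^ 2 / 2 ≤ q - (s - d) ^ 2 / 2 := by
      nlinarith [mul_le_mul_of_nonneg_right (mem_Ioi.1 hs).le hδ.le]
    simp only [max_eq_right (max_le_max_right 0 this), parabolicCap]
  have h_int {S : Set ℝ} (p c : ℝ) : IntegrableOn (parabolicCap p c · ^ a) S :=
    (integrable_parabolicCap_rpow ha p c).integrableOn
  rw [← intervalIntegral.integral_Iic_add_Ioi
      ((h_int p c).congr_fun h_left.symm measurableSet_Iic)
      ((h_int q d).congr_fun h_right.symm measurableSet_Ioi),
    setIntegral_congr_fun measurableSet_Iic h_left, setIntegral_congr_fun measurableSet_Ioi h_right,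
    integral_Ioi_eq_integral_Iic_of_reflect (c := d) fun s => by rw [parabolicCap_reflect],
    integral_Iic_parabolicCap_rpow ha hp, integral_Iic_parabolicCap_rpow ha hq, ← mul_add]
  congr 5
  · rw [hm, add_sub_cancel_left]
  · rw [hm, ← neg_sub p q]
    ring

lemma integral_max_parabolicCap_rpow {a p q c d : ℝ} (ha : 0 < a) (hp : 0 < p) (hq : 0 < q)
    (hcd : c ≠ d) :
    ∫ s, max (parabolicCap p c s) (parabolicCap q d s) ^ a = 2 * π * Ialpha a *
      (p ^ (1 / 2 + a) * Upsilon a ((|c - d| / 2 + (p - q) / |c - d|) / √(2 * p)) +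
        q ^ (1 / 2 + a) * Upsilon a ((|c - d| / 2 + (q - p) / |c - d|) / √(2 * q))) := by
  rcases hcd.lt_or_gt with h | h
  · rw [abs_sub_comm, abs_of_pos (sub_pos.2 h)]
    exact integral_max_parabolicCap_rpow_of_lt ha hp hq h
  · rw [abs_of_pos (sub_pos.2 h), add_comm (p ^ _ * _)]
    simp_rw [max_comm (parabolicCap p c _)]
    exact integral_max_parabolicCap_rpow_of_lt ha hq hp h

section MonotoneLimits

variable {ι X Y : Type*} {l : Filter ι}
  [TopologicalSpace X] [LinearOrder X] [OrderTopology X] [DenselyOrdered X]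
  [NoMinOrder X] [NoMaxOrder X] [TopologicalSpace Y] [LinearOrder Y] [OrderTopology Y]

lemma tendsto_apply_of_eventually_monotone {f : ι → X → Y} {g : X → Y} {x : ι → X} {x₀ : X}
    (hmono : ∀ᶠ i in l, Monotone (f i)) (hlim : ∀ v, Tendsto (f · v) l (𝓝 (g v)))
    (hg : ContinuousAt g x₀) (hx : Tendsto x l (𝓝 x₀)) :
    Tendsto (fun i => f i (x i)) l (𝓝 (g x₀)) := by
  refine tendsto_order.2 ⟨fun a ha => ?_, fun a ha => ?_⟩
  · have h_left : ∀ᶠ v in 𝓝[<] x₀, a < g v :=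
      (hg.eventually_const_lt ha).filter_mono nhdsWithin_le_nhds
    obtain ⟨v, hav, hvx⟩ := (h_left.and self_mem_nhdsWithin).exists
    filter_upwards [hmono, (hlim v).eventually_const_lt hav, hx.eventually_const_lt hvx]
      with i hi hav hvx using hav.trans_le (hi hvx.le)
  · have h_right : ∀ᶠ v in 𝓝[>] x₀, g v < a :=
      (hg.eventually_lt_const ha).filter_mono nhdsWithin_le_nhds
    obtain ⟨v, hav, hvx⟩ := (h_right.and self_mem_nhdsWithin).exists
    filter_upwards [hmono, (hlim v).eventually_lt_const hav, hx.eventually_lt_const hvx]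
      with i hi hav hvx using (hi hvx.le).trans_lt hav

end MonotoneLimits

/-- Regular variation of `G` at `0` from the right with index `α`. A distribution with upper
endpoint `1` is in the Weibull domain of attraction when its tail, as a function of the distance to
the endpoint, has this property. -/
def IsRegularlyVaryingAtZero (G : ℝ → ℝ) (α : ℝ) : Prop :=
  ∀ x > 0, Tendsto (fun t => G (t * x) / G t) (𝓝[>] 0) (𝓝 (x ^ α))

namespace IsRegularlyVaryingAtZero

variable {ι : Type*} {l : Filter ι} {G : ℝ → ℝ} {α : ℝ} {u : ι → ℝ}

lemma tendsto_div (hG : IsRegularlyVaryingAtZero G α) (hmono : Monotone G)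
    (hG0 : ∀ t ≤ 0, G t = 0) (hα : 0 < α) (hu : Tendsto u l (𝓝[>] 0)) {w : ι → ℝ} {w₀ : ℝ}
    (hw : Tendsto w l (𝓝 w₀)) (hw₀ : 0 ≤ w₀) :
    Tendsto (fun i => G (u i * w i) / G (u i)) l (𝓝 (w₀ ^ α)) := by
  have hu_pos : ∀ᶠ i in l, 0 < u i := hu.eventually self_mem_nhdsWithin
  have h_mono : ∀ᶠ i in l, Monotone fun v => G (u i * v) / G (u i) := by
    filter_upwards [hu_pos] with i hi v v' hv
    have hG_nonneg : 0 ≤ G (u i) := hG0 0 le_rfl ▸ hmono hi.le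
    exact div_le_div_of_nonneg_right (hmono (mul_le_mul_of_nonneg_left hv hi.le)) hG_nonneg
  have h_lim : ∀ v, Tendsto (fun i => G (u i * v) / G (u i)) l (𝓝 (max v 0 ^ α)) := by
    intro v
    rcases lt_or_ge 0 v with hv | hv
    · rw [max_eq_left hv.le]
      exact (hG v hv).comp hu
    · rw [max_eq_right hv, zero_rpow hα.ne']
      refine tendsto_const_nhds.congr' ?_
      filter_upwards [hu_pos] with i hi
      rw [hG0 _ (mul_nonpos_of_nonneg_of_nonpos hi.le hv), zero_div]
  have h_cont : Continuous fun v : ℝ => max v 0 ^ α :=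
    Continuous.rpow_const (by fun_prop) fun _ => Or.inr hα.le
  simpa only [max_eq_left hw₀] using
    tendsto_apply_of_eventually_monotone h_mono h_lim h_cont.continuousAt hw

lemma tendsto_integral_div [l.IsCountablyGenerated] (hG : IsRegularlyVaryingAtZero G α)
    (hmono : Monotone G) (hG0 : ∀ t ≤ 0, G t = 0) (hα : 0 < α) (hu : Tendsto u l (𝓝[>] 0))
    {X : Type*} [MeasurableSpace X] {ν : Measure X} {K : Set X} (hK : MeasurableSet K)
    (hνK : ν K ≠ ⊤) {w : ι → X → ℝ} {w₀ : X → ℝ} {m : ℝ} (hw_meas : ∀ i, Measurable (w i))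
    (hw_le : ∀ᶠ i in l, ∀ x, w i x ≤ K.indicator (fun _ => m) x)
    (hw : ∀ x, Tendsto (w · x) l (𝓝 (w₀ x))) (hw₀ : ∀ x, 0 ≤ w₀ x) :
    Tendsto (fun i => ∫ x, G (u i * w i x) / G (u i) ∂ν) l (𝓝 (∫ x, w₀ x ^ α ∂ν)) := by
  have hG_nonneg : ∀ t, 0 ≤ G t := fun t => by
    rcases le_total t 0 with ht | ht
    · exact (hG0 t ht).ge
    · exact hG0 0 le_rfl ▸ hmono ht
  have h_ratio : ∀ᶠ i in l, G (u i * |m|) / G (u i) < |m| ^ α + 1 :=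
    (hG.tendsto_div hmono hG0 hα hu tendsto_const_nhds (abs_nonneg m)).eventually_lt_const
      (lt_add_one _)
  refine tendsto_integral_filter_of_dominated_convergence
    (K.indicator fun _ => |m| ^ α + 1) (.of_forall fun i => ?_) ?_ ?_
    (.of_forall fun x => hG.tendsto_div hmono hG0 hα hu (hw x) (hw₀ x))
  · exact ((hmono.measurable.comp ((hw_meas i).const_mul _)).div_const _).aestronglyMeasurable
  · filter_upwards [h_ratio, hw_le, hu.eventually self_mem_nhdsWithin] with i h_ratio hw_le hu_pos
    refine .of_forall fun x => ?_
    rw [norm_of_nonneg (div_nonneg (hG_nonneg _) (hG_nonneg _))]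
    have hu_nonneg : 0 ≤ u i := (mem_Ioi.1 hu_pos).le
    specialize hw_le x
    by_cases hx : x ∈ K
    · rw [indicator_of_mem hx] at hw_le ⊢
      refine le_trans ?_ h_ratio.le
      gcongr
      · exact hG_nonneg _
      · exact hmono (mul_le_mul_of_nonneg_left (hw_le.trans (le_abs_self m)) hu_nonneg)
    · rw [indicator_of_notMem hx] at hw_le ⊢
      rw [hG0 _ (mul_nonpos_of_nonneg_of_nonpos hu_nonneg hw_le), zero_div]
  · exact (integrable_indicator_iff hK).2 (integrableOn_const hνK)

end IsRegularlyVaryingAtZero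

section SmallAngles

variable {ι : Type*} {l : Filter ι} {u : ι → ℝ}

lemma one_sub_cos_eq_sq_mul_sinc_sq (z : ℝ) : 1 - cos z = z ^ 2 / 2 * sinc (z / 2) ^ 2 := by
  have h_half : 1 - cos z = 2 * sin (z / 2) ^ 2 := by
    rw [sin_sq_eq_half_sub, mul_div_cancel₀ z two_ne_zero]
    ring
  rcases eq_or_ne z 0 with rfl | hz
  · simp
  · rw [h_half, sinc_of_ne_zero (div_ne_zero hz two_ne_zero)]
    field_simp

lemma tendsto_sinc_half {z : ι → ℝ} (hz : Tendsto z l (𝓝 0)) :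
    Tendsto (fun i => sinc (z i / 2)) l (𝓝 1) := by
  have h := (continuous_sinc.tendsto (0 / 2)).comp (hz.div_const 2)
  rwa [zero_div, sinc_zero] at h

lemma tendsto_zero_of_tendsto_div_sqrt (hu : Tendsto u l (𝓝[>] 0)) {z : ι → ℝ} {c : ℝ}
    (hz : Tendsto (fun i => z i / √(u i)) l (𝓝 c)) : Tendsto z l (𝓝 0) := by
  have h := hz.mul (hu.mono_right nhdsWithin_le_nhds).sqrt
  rw [sqrt_zero, mul_zero] at h
  refine h.congr' ?_
  filter_upwards [hu.eventually self_mem_nhdsWithin] with i hi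
  exact div_mul_cancel₀ _ (sqrt_pos.2 hi).ne'

lemma tendsto_one_sub_cos_div (hu : Tendsto u l (𝓝[>] 0)) {z : ι → ℝ} {c : ℝ}
    (hz : Tendsto (fun i => z i / √(u i)) l (𝓝 c)) :
    Tendsto (fun i => (1 - cos (z i)) / u i) l (𝓝 (c ^ 2 / 2)) := by
  have h := ((hz.pow 2).div_const 2).mul
    ((tendsto_sinc_half (tendsto_zero_of_tendsto_div_sqrt hu hz)).pow 2)
  rw [one_pow, mul_one] at h
  refine h.congr' ?_
  filter_upwards [hu.eventually self_mem_nhdsWithin] with i hi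
  rw [one_sub_cos_eq_sq_mul_sinc_sq, div_pow, sq_sqrt (mem_Ioi.1 hi).le]
  ring

lemma tendsto_arccos_div_sqrt (hu : Tendsto u l (𝓝[>] 0)) {ρ : ι → ℝ} {c : ℝ} (hc : 0 ≤ c)
    (hρ : ∀ i, ρ i ∈ Icc (-1) 1) (hlim : Tendsto (fun i => (1 - ρ i) / u i) l (𝓝 (c ^ 2 / 2))) :
    Tendsto (fun i => arccos (ρ i) / √(u i)) l (𝓝 c) := by
  have hu_pos : ∀ᶠ i in l, 0 < u i := hu.eventually self_mem_nhdsWithin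
  have hρ1 : Tendsto ρ l (𝓝 1) := by
    have h := (hlim.mul (hu.mono_right nhdsWithin_le_nhds)).const_sub 1
    rw [mul_zero, sub_zero] at h
    refine h.congr' ?_
    filter_upwards [hu_pos] with i hi
    rw [div_mul_cancel₀ _ hi.ne', sub_sub_cancel]
  have h_angle : Tendsto (fun i => arccos (ρ i)) l (𝓝 0) :=
    arccos_one ▸ (continuous_arccos.tendsto 1).comp hρ1
  have h_sinc := tendsto_sinc_half h_angle
  have h_sq : Tendsto (fun i => (arccos (ρ i) / √(u i)) ^ 2) l (𝓝 (c ^ 2)) := by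
    have h := (hlim.const_mul 2).div (h_sinc.pow 2) (by norm_num)
    rw [mul_div_cancel₀ _ two_ne_zero, one_pow, div_one] at h
    refine h.congr' ?_
    filter_upwards [hu_pos, h_sinc.eventually_ne one_ne_zero] with i hi h_sinc
    have h_cos := one_sub_cos_eq_sq_mul_sinc_sq (arccos (ρ i))
    rw [cos_arccos (hρ i).1 (hρ i).2] at h_cos
    rw [Pi.div_apply, h_cos, div_pow, sq_sqrt hi.le]
    field_simp
  have h := h_sq.sqrt
  rw [sqrt_sq hc] at h
  exact h.congr fun i => sqrt_sq (div_nonneg (arccos_nonneg _) (sqrt_nonneg _))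

end SmallAngles

section SkewProjection

/-- The angular part of a margin: `ρ |X| + √(1 - ρ²) Y = R * skewProjection ρ Θ` when
`X = R cos Θ` and `Y = R sin Θ`. -/
noncomputable def skewProjection (ρ t : ℝ) : ℝ := ρ * |cos t| + √(1 - ρ ^ 2) * sin t

@[fun_prop]
lemma continuous_skewProjection (ρ : ℝ) : Continuous (skewProjection ρ) := by
  unfold skewProjection
  fun_prop

lemma periodic_skewProjection (ρ : ℝ) : Function.Periodic (skewProjection ρ) (2 * π) := fun t => by
  simp only [skewProjection, cos_add_two_pi, sin_add_two_pi]

lemma skewProjection_pi_sub (ρ t : ℝ) : skewProjection ρ (π - t) = skewProjection ρ t := by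
  simp only [skewProjection, cos_pi_sub, sin_pi_sub, abs_neg]

lemma skewProjection_eq_cos_sub_arccos {ρ t : ℝ} (hρ : ρ ∈ Icc (-1) 1)
    (ht : t ∈ Icc (-(π / 2)) (π / 2)) : skewProjection ρ t = cos (t - arccos ρ) := by
  rw [skewProjection, abs_of_nonneg (cos_nonneg_of_mem_Icc ht), cos_sub, cos_arccos hρ.1 hρ.2,
    sin_arccos]
  ring

end SkewProjection

section RadialExcess

variable {a b r : ℝ}

/-- The deficit `1 - r` below which a radius `r ≤ 1` satisfies `b < r * a`, truncated to `0` when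
no such `r` does. The maximum in the denominator performs the truncation and is positive when
`0 < b`. -/
noncomputable def radialExcess (b a : ℝ) : ℝ := 1 - b / max a b

@[fun_prop]
lemma measurable_radialExcess (b : ℝ) : Measurable (radialExcess b) := by
  unfold radialExcess
  fun_prop

lemma one_sub_lt_radialExcess_iff (hb : 0 < b) (hr : 0 < r) (hr1 : r ≤ 1) :
    1 - r < radialExcess b a ↔ b < r * a := by
  rw [radialExcess, sub_lt_sub_iff_left, div_lt_iff₀ (lt_max_of_lt_right hb),
    mul_max_of_nonneg _ _ hr.le, lt_max_iff, or_iff_left (mul_le_of_le_one_left hb.le hr1).not_gt]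

lemma radialExcess_eq_div (hb : 0 < b) : radialExcess b a = max (a - b) 0 / max a b := by
  have h_pos : 0 < max a b := lt_max_of_lt_right hb
  rw [radialExcess, one_sub_div h_pos.ne', ← max_sub_sub_right, sub_self]

lemma radialExcess_of_le (hb : 0 < b) (hab : a ≤ b) : radialExcess b a = 0 := by
  rw [radialExcess, max_eq_right hab, div_self hb.ne', sub_self]

lemma radialExcess_le_one_sub (hb : 0 < b) (ha : a ≤ 1) (hb1 : b ≤ 1) :
    radialExcess b a ≤ 1 - b :=
  sub_le_sub_left (le_div_self hb.le (lt_max_of_lt_right hb) (max_le ha hb1)) 1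

lemma tendsto_radialExcess_div {ι : Type*} {l : Filter ι} {a b u : ι → ℝ} {v : ℝ}
    (ha : Tendsto a l (𝓝 1)) (hb : Tendsto b l (𝓝 1)) (hu : ∀ᶠ i in l, 0 < u i)
    (hv : Tendsto (fun i => (a i - b i) / u i) l (𝓝 v)) :
    Tendsto (fun i => radialExcess (b i) (a i) / u i) l (𝓝 (max v 0)) := by
  have h := (hv.max (tendsto_const_nhds (x := 0))).div (ha.max hb) (by norm_num)
  rw [max_self, div_one] at h
  refine h.congr' ?_
  filter_upwards [hu, hb.eventually_const_lt one_pos] with i hu hb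
  rw [radialExcess_eq_div hb, Pi.div_apply, div_right_comm, ← max_div_div_right hu.le, zero_div]

end RadialExcess

/-- The functions `H i`, restricted to `S`, are carried by a window of width of order `√(u i)`
around `0`, and after rescaling abscissae by `√(u i)` and ordinates by `u i` they converge to `w`.
Only upper bounds are required, since `H i` will be the argument of a function that vanishes on
`(-∞, 0]`. -/
structure IsConcentrating {ι : Type*} (l : Filter ι) (u : ι → ℝ) (S : Set ℝ) (H : ι → ℝ → ℝ)
    (w : ℝ → ℝ) : Prop where
  tendsto : ∀ s, Tendsto (fun i => H i (√(u i) * s) / u i) l (𝓝 (w s))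
  exists_le : ∃ m, ∀ᶠ i in l, ∀ t ∈ S, H i t ≤ u i * m
  exists_nonpos : ∃ M, ∀ᶠ i in l, ∀ t ∈ S, √(u i) * M < |t| → H i t ≤ 0

namespace IsConcentrating

variable {ι : Type*} {l : Filter ι} {u : ι → ℝ} {S : Set ℝ} {H H' : ι → ℝ → ℝ} {w w' : ℝ → ℝ}

lemma sup (hu : ∀ᶠ i in l, 0 < u i) (hH : IsConcentrating l u S H w)
    (hH' : IsConcentrating l u S H' w') :
    IsConcentrating l u S (fun i t => max (H i t) (H' i t)) fun s => max (w s) (w' s) where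
  tendsto s := by
    refine ((hH.tendsto s).max (hH'.tendsto s)).congr' ?_
    filter_upwards [hu] with i hi using max_div_div_right hi.le _ _
  exists_le := by
    obtain ⟨m, hm⟩ := hH.exists_le
    obtain ⟨m', hm'⟩ := hH'.exists_le
    refine ⟨max m m', ?_⟩
    filter_upwards [hu, hm, hm'] with i hi hm hm' t ht
    rw [mul_max_of_nonneg _ _ hi.le]
    exact max_le_max (hm t ht) (hm' t ht)
  exists_nonpos := by
    obtain ⟨M, hM⟩ := hH.exists_nonpos
    obtain ⟨M', hM'⟩ := hH'.exists_nonpos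
    refine ⟨max M M', ?_⟩
    filter_upwards [hM, hM'] with i hM hM' t ht hlt
    rw [mul_max_of_nonneg _ _ (sqrt_nonneg _), max_lt_iff] at hlt
    exact max_le (hM t ht hlt.1) (hM' t ht hlt.2)

lemma exists_indicator_div_le (hu : ∀ᶠ i in l, 0 < u i) (hH : IsConcentrating l u S H w) :
    ∃ m M, ∀ᶠ i in l, ∀ s,
      S.indicator (H i) (√(u i) * s) / u i ≤ (Icc (-M) M).indicator (fun _ => m) s := by
  obtain ⟨m, hm⟩ := hH.exists_le
  obtain ⟨M, hM⟩ := hH.exists_nonpos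
  refine ⟨|m|, M, ?_⟩
  filter_upwards [hu, hm, hM] with i hi hm hM s
  by_cases hs : √(u i) * s ∈ S
  · rw [indicator_of_mem hs]
    by_cases hsM : s ∈ Icc (-M) M
    · rw [indicator_of_mem hsM, div_le_iff₀' hi]
      exact (hm _ hs).trans (mul_le_mul_of_nonneg_left (le_abs_self m) hi.le)
    · rw [indicator_of_notMem hsM]
      refine div_nonpos_of_nonpos_of_nonneg (hM _ hs ?_) hi.le
      rw [abs_mul, abs_of_nonneg (sqrt_nonneg _)]
      exact mul_lt_mul_of_pos_left (not_le.1 (mt abs_le.1 hsM)) (sqrt_pos.2 hi)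
  · rw [indicator_of_notMem hs, zero_div]
    exact indicator_nonneg (fun _ _ => abs_nonneg m) s

lemma tendsto_integral [l.IsCountablyGenerated] (hH : IsConcentrating l u S H w)
    (hu : Tendsto u l (𝓝[>] 0)) (hS : MeasurableSet S) (hS0 : S ∈ 𝓝 0)
    (hH_meas : ∀ i, Measurable (H i)) (hw : ∀ s, 0 ≤ w s) {G : ℝ → ℝ} {α : ℝ}
    (hG : IsRegularlyVaryingAtZero G α) (hmono : Monotone G) (hG0 : ∀ t ≤ 0, G t = 0)
    (hα : 0 < α) :
    Tendsto (fun i => (√(u i) * G (u i))⁻¹ * ∫ t in S, G (H i t)) l (𝓝 (∫ s, w s ^ α)) := by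
  have hu_pos : ∀ᶠ i in l, 0 < u i := hu.eventually self_mem_nhdsWithin
  obtain ⟨m, M, h_le⟩ := hH.exists_indicator_div_le hu_pos
  have h_sqrt : Tendsto (fun i => √(u i)) l (𝓝 0) :=
    sqrt_zero ▸ (hu.mono_right nhdsWithin_le_nhds).sqrt
  have h_lim : ∀ s, Tendsto (fun i => S.indicator (H i) (√(u i) * s) / u i) l (𝓝 (w s)) := by
    refine fun s => (hH.tendsto s).congr' ?_
    have h_mem : Tendsto (fun i => √(u i) * s) l (𝓝 0) := zero_mul s ▸ h_sqrt.mul_const s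
    filter_upwards [h_mem.eventually hS0] with i hi
    rw [indicator_of_mem hi]
  have h_meas : ∀ i, Measurable fun s => S.indicator (H i) (√(u i) * s) / u i := fun i =>
    (((hH_meas i).indicator hS).comp (measurable_const_mul _)).div_const _
  refine (hG.tendsto_integral_div hmono hG0 hα hu measurableSet_Icc measure_Icc_lt_top.ne h_meas
    h_le h_lim hw).congr' ?_
  filter_upwards [hu_pos] with i hi
  have h_subst := Measure.integral_comp_mul_left (fun t => G (S.indicator (H i) t)) √(u i)
  have h_indicator : (fun t => G (S.indicator (H i) t)) = S.indicator fun t => G (H i t) :=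
    (indicator_comp_of_zero (hG0 0 le_rfl)).symm
  rw [abs_of_nonneg (inv_nonneg.2 (sqrt_nonneg _)), smul_eq_mul, h_indicator,
    integral_indicator hS] at h_subst
  simp_rw [mul_div_cancel₀ _ hi.ne']
  rw [integral_div, mul_inv, mul_right_comm, ← h_subst, div_eq_mul_inv]

end IsConcentrating

lemma cos_sub_le_of_sqrt_mul_lt_abs {φ t p k u : ℝ} (hu : 0 < u) (hp : 0 ≤ p)
    (hφ : φ ∈ Icc 0 (π / 2)) (hφk : φ ≤ √u * k) (ht : t ∈ Icc (-(π / 2)) (π / 2))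
    (htk : √u * (k + π * √(p / 2)) < |t|) : cos (t - φ) ≤ 1 - u * p := by
  have h_far : √u * (π * √(p / 2)) ≤ |t - φ| := by
    have := abs_sub_abs_le_abs_sub t φ
    rw [abs_of_nonneg hφ.1] at this
    linarith
  have h_sq : u * (π ^ 2 * (p / 2)) ≤ (t - φ) ^ 2 := by
    have := pow_le_pow_left₀ (by positivity) h_far 2
    rwa [mul_pow, mul_pow, sq_sqrt hu.le, sq_sqrt (by positivity), sq_abs] at this
  have h_abs : |t - φ| ≤ π := abs_le.2 ⟨by linarith [ht.1, hφ.2], by linarith [ht.2, hφ.1, pi_pos]⟩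
  calc cos (t - φ) ≤ 1 - 2 / π ^ 2 * (t - φ) ^ 2 := cos_le_one_sub_mul_cos_sq h_abs
    _ ≤ 1 - 2 / π ^ 2 * (u * (π ^ 2 * (p / 2))) := by gcongr
    _ = 1 - u * p := by field_simp

section Margin

variable {ι : Type*} {l : Filter ι} {u ρ : ι → ℝ}

lemma tendsto_one_add_mul_const (hu : Tendsto u l (𝓝 0)) (x : ℝ) :
    Tendsto (fun i => 1 + u i * x) l (𝓝 1) := by
  simpa only [zero_mul, add_zero] using (hu.mul_const x).const_add 1

lemma tendsto_radialExcess_skewProjection_div (hu : Tendsto u l (𝓝[>] 0))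
    (hρ : ∀ i, ρ i ∈ Icc (-1) 1) {c : ℝ}
    (h_angle : Tendsto (fun i => arccos (ρ i) / √(u i)) l (𝓝 c)) (x s : ℝ) :
    Tendsto (fun i => radialExcess (1 + u i * x) (skewProjection (ρ i) (√(u i) * s)) / u i) l
      (𝓝 (parabolicCap (-x) c s)) := by
  have hu_pos : ∀ᶠ i in l, 0 < u i := hu.eventually self_mem_nhdsWithin
  have hu_zero : Tendsto u l (𝓝 0) := hu.mono_right nhdsWithin_le_nhds
  have h_shift : Tendsto (fun i => (√(u i) * s - arccos (ρ i)) / √(u i)) l (𝓝 (s - c)) := by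
    refine (h_angle.const_sub s).congr' ?_
    filter_upwards [hu_pos] with i hi
    rw [sub_div, mul_div_cancel_left₀ _ (sqrt_pos.2 hi).ne']
  have h_cos : Tendsto (fun i => cos (√(u i) * s - arccos (ρ i))) l (𝓝 1) :=
    cos_zero ▸ (continuous_cos.tendsto 0).comp (tendsto_zero_of_tendsto_div_sqrt hu h_shift)
  have h_gap : Tendsto (fun i => (cos (√(u i) * s - arccos (ρ i)) - (1 + u i * x)) / u i) l
      (𝓝 (-x - (s - c) ^ 2 / 2)) := by
    refine ((tendsto_one_sub_cos_div hu h_shift).const_sub (-x)).congr' ?_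
    filter_upwards [hu_pos] with i hi
    field_simp
    ring
  refine (tendsto_radialExcess_div h_cos (tendsto_one_add_mul_const hu_zero x) hu_pos h_gap).congr'
    ?_
  have h_mem : Tendsto (fun i => √(u i) * s) l (𝓝 0) := by
    simpa only [sqrt_zero, zero_mul] using hu_zero.sqrt.mul_const s
  have h_half_pi : 0 < π / 2 := by positivity
  filter_upwards [h_mem.eventually (Icc_mem_nhds (neg_lt_zero.2 h_half_pi) h_half_pi)] with i hi
  rw [skewProjection_eq_cos_sub_arccos (hρ i) hi]

lemma isConcentrating_radialExcess_skewProjection (hu : Tendsto u l (𝓝[>] 0))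
    (hρ : ∀ i, ρ i ∈ Icc 0 1) {lam : ℝ} (hlam : 0 ≤ lam) {x : ℝ} (hx : x ≤ 0)
    (hlim : Tendsto (fun i => (1 - ρ i) / u i) l (𝓝 (2 * lam ^ 2))) :
    IsConcentrating l u (Ioc (-(π / 2)) (π / 2))
      (fun i t => radialExcess (1 + u i * x) (skewProjection (ρ i) t))
      (parabolicCap (-x) (2 * lam)) := by
  have hu_pos : ∀ᶠ i in l, 0 < u i := hu.eventually self_mem_nhdsWithin
  have hρ' : ∀ i, ρ i ∈ Icc (-1) 1 := fun i => Icc_subset_Icc_left (by norm_num) (hρ i)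
  have h_angle : Tendsto (fun i => arccos (ρ i) / √(u i)) l (𝓝 (2 * lam)) :=
    tendsto_arccos_div_sqrt hu (by positivity) hρ' (by convert hlim using 2; ring)
  have h_level_pos : ∀ᶠ i in l, 0 < 1 + u i * x :=
    (tendsto_one_add_mul_const (hu.mono_right nhdsWithin_le_nhds) x).eventually_const_lt one_pos
  refine ⟨tendsto_radialExcess_skewProjection_div hu hρ' h_angle x, ⟨-x, ?_⟩,
    ⟨2 * lam + 1 + π * √(-x / 2), ?_⟩⟩
  · filter_upwards [hu_pos, h_level_pos] with i hi h_pos t ht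
    rw [skewProjection_eq_cos_sub_arccos (hρ' i) (Ioc_subset_Icc_self ht)]
    refine (radialExcess_le_one_sub h_pos (cos_le_one _) ?_).trans_eq (by ring)
    linarith [mul_nonpos_of_nonneg_of_nonpos hi.le hx]
  · filter_upwards [hu_pos, h_level_pos, h_angle.eventually_le_const (lt_add_one (2 * lam))]
      with i hi h_pos hφ t ht hlt
    rw [div_le_iff₀' (sqrt_pos.2 hi)] at hφ
    rw [skewProjection_eq_cos_sub_arccos (hρ' i) (Ioc_subset_Icc_self ht)]
    refine (radialExcess_of_le h_pos ?_).le
    have h_cos := cos_sub_le_of_sqrt_mul_lt_abs hi (neg_nonneg.2 hx)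
      ⟨arccos_nonneg _, arccos_le_pi_div_two.2 (hρ i).1⟩ hφ (Ioc_subset_Icc_self ht) hlt
    rwa [mul_neg, sub_neg_eq_add] at h_cos

end Margin

lemma intervalIntegral_eq_two_smul_of_periodic_of_reflect {E : Type*} [NormedAddCommGroup E]
    [NormedSpace ℝ E] {h : ℝ → E} {T : ℝ} (hper : Function.Periodic h (2 * T))
    (hrefl : ∀ t, h (T - t) = h t) (hint : ∀ a b, IntervalIntegrable h volume a b) :
    ∫ t in -T..T, h t = (2 : ℝ) • ∫ t in -(T / 2)..T / 2, h t := by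
  have h_half : ∫ t in T / 2..3 * T / 2, h t = ∫ t in -(T / 2)..T / 2, h t := by
    have h_comp := intervalIntegral.integral_comp_sub_left (a := -(T / 2)) (b := T / 2) h T
    simp only [hrefl] at h_comp
    rw [h_comp]
    congr 1 <;> ring
  calc ∫ t in -T..T, h t = ∫ t in -T..-T + 2 * T, h t := by ring_nf
    _ = ∫ t in -(T / 2)..-(T / 2) + 2 * T, h t := hper.intervalIntegral_add_eq _ _
    _ = ∫ t in -(T / 2)..3 * T / 2, h t := by ring_nf
    _ = (∫ t in -(T / 2)..T / 2, h t) + ∫ t in T / 2..3 * T / 2, h t :=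
      (intervalIntegral.integral_add_adjacent_intervals (hint _ _) (hint _ _)).symm
    _ = (2 : ℝ) • ∫ t in -(T / 2)..T / 2, h t := by rw [h_half, two_smul]

section Angle

variable {Ω : Type*} [MeasurableSpace Ω] {μ : Measure Ω} [IsFiniteMeasure μ]

lemma measureReal_prodMk_mem_eq_integral {α β : Type*} [MeasurableSpace α] [MeasurableSpace β]
    {D : Ω → α} {Θ : Ω → β} (hD : Measurable D) (hΘ : Measurable Θ) (hindep : IndepFun D Θ μ)
    {s : Set (α × β)} (hs : MeasurableSet s) :
    μ.real {ω | (D ω, Θ ω) ∈ s} = ∫ θ, μ.real {ω | (D ω, θ) ∈ s} ∂(μ.map Θ) := by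
  have h_slice : ∀ θ, μ.map D ((fun a => (a, θ)) ⁻¹' s) = μ {ω | (D ω, θ) ∈ s} := fun θ =>
    Measure.map_apply hD (measurable_prodMk_right hs)
  have h_fubini : μ {ω | (D ω, Θ ω) ∈ s} = ∫⁻ θ, μ {ω | (D ω, θ) ∈ s} ∂(μ.map Θ) := by
    have h_map := Measure.map_apply (μ := μ) (hD.prodMk hΘ) hs
    rw [(indepFun_iff_map_prod_eq_prod_map_map hD.aemeasurable hΘ.aemeasurable).1 hindep,
      Measure.prod_apply_symm hs] at h_map
    simp_rw [h_slice] at h_map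
    exact h_map.symm
  have h_meas : Measurable fun θ => μ {ω | (D ω, θ) ∈ s} :=
    funext h_slice ▸ measurable_measure_prodMk_right hs
  rw [measureReal_def, h_fubini, ← integral_toReal h_meas.aemeasurable (.of_forall fun θ =>
    measure_lt_top μ _)]
  rfl

lemma measureReal_lt_comp_uniform_angle {D Θ : Ω → ℝ} (hD : Measurable D) (hΘ : Measurable Θ)
    (hindep : IndepFun D Θ μ)
    (hunif : μ.map Θ = (ENNReal.ofReal (2 * π))⁻¹ • volume.restrict (Ioo (-π) π)) {H : ℝ → ℝ}
    (hH : Measurable H) (hper : Function.Periodic H (2 * π)) (hrefl : ∀ t, H (π - t) = H t) :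
    μ.real {ω | D ω < H (Θ ω)} =
      π⁻¹ * ∫ t in Ioc (-(π / 2)) (π / 2), μ.real {ω | D ω < H t} := by
  have hG_mono : Monotone fun t => μ.real {ω | D ω < t} := fun s t hst =>
    measureReal_mono fun ω (hω : D ω < s) => hω.trans_le hst
  have h_int : ∀ a b, IntervalIntegrable (fun t => μ.real {ω | D ω < H t}) volume a b :=
    fun a b => (intervalIntegrable_const (c := μ.real univ)).mono_fun
      (hG_mono.measurable.comp hH).aestronglyMeasurable (.of_forall fun t => by
        simp only [norm_of_nonneg measureReal_nonneg]
        exact measureReal_mono (subset_univ _))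
  have h_fold := intervalIntegral_eq_two_smul_of_periodic_of_reflect
    (h := fun t => μ.real {ω | D ω < H t}) (T := π) (fun t => by simp only [hper t])
    (fun t => by simp only [hrefl]) h_int
  have hπ := pi_pos
  rw [intervalIntegral.integral_of_le (by linarith), intervalIntegral.integral_of_le (by linarith),
    integral_Ioc_eq_integral_Ioo, smul_eq_mul] at h_fold
  have h_indep := measureReal_prodMk_mem_eq_integral hD hΘ hindep
    (measurableSet_lt measurable_fst (hH.comp measurable_snd))
  simp only [mem_ofPred_eq, Function.comp_apply] at h_indep
  rw [h_indep, hunif, integral_smul_measure, h_fold, ENNReal.toReal_inv,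
    ENNReal.toReal_ofReal (by positivity), smul_eq_mul]
  field_simp

end Angle

lemma tendsto_pow_exp_neg_of_tendsto_mul_one_sub {p : ℕ → ℝ} {L : ℝ}
    (h : Tendsto (fun n : ℕ => n * (1 - p n)) atTop (𝓝 L)) :
    Tendsto (fun n => p n ^ n) atTop (𝓝 (exp (-L))) := by
  have h' : Tendsto (fun n : ℕ => n * (p n - 1)) atTop (𝓝 (-L)) :=
    h.neg.congr fun n => by ring
  simpa only [add_sub_cancel] using tendsto_one_add_pow_exp_of_tendsto h'

section Exceedance

variable {Ω : Type*} [MeasurableSpace Ω] {μ : Measure Ω}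

lemma one_sub_measureReal_le_one_sub [IsProbabilityMeasure μ] {R : Ω → ℝ} (hR : Measurable R)
    (t : ℝ) : 1 - μ.real {ω | R ω ≤ 1 - t} = μ.real {ω | 1 - R ω < t} := by
  rw [← probReal_compl_eq_one_sub (measurableSet_le hR measurable_const)]
  congr 1 with ω
  simp only [mem_compl_iff, mem_ofPred_eq, not_le, sub_lt_comm]

lemma mul_skewProjection {r : ℝ} (hr : 0 ≤ r) (ρ t : ℝ) :
    r * skewProjection ρ t = ρ * |r * cos t| + √(1 - ρ ^ 2) * (r * sin t) := by
  rw [skewProjection, abs_mul, abs_of_nonneg hr]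
  ring

lemma one_sub_measureReal_margins_le [IsProbabilityMeasure μ] {R Θ : Ω → ℝ} (hR : Measurable R)
    (hΘ : Measurable Θ) (hR_pos : ∀ᵐ ω ∂μ, 0 < R ω) (hR_le : ∀ᵐ ω ∂μ, R ω ≤ 1) {ρ₁ ρ₂ b₁ b₂ : ℝ}
    (hb₁ : 0 < b₁) (hb₂ : 0 < b₂) :
    1 - μ.real {ω | ρ₁ * |R ω * cos (Θ ω)| + √(1 - ρ₁ ^ 2) * (R ω * sin (Θ ω)) ≤ b₁ ∧
        ρ₂ * |R ω * cos (Θ ω)| + √(1 - ρ₂ ^ 2) * (R ω * sin (Θ ω)) ≤ b₂} =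
      μ.real {ω | 1 - R ω < max (radialExcess b₁ (skewProjection ρ₁ (Θ ω)))
        (radialExcess b₂ (skewProjection ρ₂ (Θ ω)))} := by
  have h_meas (ρ b : ℝ) : MeasurableSet
      {ω | ρ * |R ω * cos (Θ ω)| + √(1 - ρ ^ 2) * (R ω * sin (Θ ω)) ≤ b} :=
    measurableSet_le (by fun_prop) measurable_const
  rw [ofPred_and, ← probReal_compl_eq_one_sub ((h_meas ρ₁ b₁).inter (h_meas ρ₂ b₂))]
  refine measureReal_congr (eventuallyEq_set.2 ?_)
  filter_upwards [hR_pos, hR_le] with ω hω hω'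
  simp only [mem_compl_iff, mem_inter_iff, mem_ofPred_eq, ← mul_skewProjection hω.le, lt_max_iff,
    one_sub_lt_radialExcess_iff hb₁ hω hω', one_sub_lt_radialExcess_iff hb₂ hω hω', not_and_or,
    not_le]

lemma tendsto_mul_measureReal_lt_of_isConcentrating [IsFiniteMeasure μ] {D Θ : Ω → ℝ}
    (hD : Measurable D) (hΘ : Measurable Θ) (hindep : IndepFun D Θ μ)
    (hunif : μ.map Θ = (ENNReal.ofReal (2 * π))⁻¹ • volume.restrict (Ioo (-π) π))
    (hD_nonneg : ∀ᵐ ω ∂μ, 0 ≤ D ω) {α : ℝ} (hα : 0 < α)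
    (hG : IsRegularlyVaryingAtZero (fun t => μ.real {ω | D ω < t}) α) {u : ℕ → ℝ}
    (hu : Tendsto u atTop (𝓝[>] 0))
    (hun : Tendsto (fun n : ℕ => n * √(u n) * μ.real {ω | D ω < u n}) atTop (𝓝 1))
    {H : ℕ → ℝ → ℝ} (hH : ∀ n, Measurable (H n)) (hper : ∀ n, Function.Periodic (H n) (2 * π))
    (hrefl : ∀ n t, H n (π - t) = H n t) {w : ℝ → ℝ} (hw : ∀ s, 0 ≤ w s)
    (hconc : IsConcentrating atTop u (Ioc (-(π / 2)) (π / 2)) H w) :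
    Tendsto (fun n : ℕ => n * μ.real {ω | D ω < H n (Θ ω)}) atTop
      (𝓝 (π⁻¹ * ∫ s, w s ^ α)) := by
  have hmono : Monotone fun t => μ.real {ω | D ω < t} := fun s t hst =>
    measureReal_mono fun ω (hω : D ω < s) => hω.trans_le hst
  have hG0 : ∀ t ≤ 0, μ.real {ω | D ω < t} = 0 := fun t ht => by
    refine (measureReal_eq_zero_iff).2 (measure_eq_zero_iff_ae_notMem.2 ?_)
    filter_upwards [hD_nonneg] with ω hω using (ht.trans hω).not_gt
  have h_half_pi : 0 < π / 2 := by positivity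
  have h_integral := hconc.tendsto_integral hu measurableSet_Ioc
    (Ioc_mem_nhds (neg_lt_zero.2 h_half_pi) h_half_pi) hH hw hG hmono hG0 hα
  have h := hun.mul (h_integral.const_mul π⁻¹)
  rw [one_mul] at h
  refine h.congr' ?_
  filter_upwards [hun.eventually_ne one_ne_zero] with n hn
  rw [measureReal_lt_comp_uniform_angle hD hΘ hindep hunif (hH n) (hper n) (hrefl n)]
  have h_ne := right_ne_zero_of_mul hn
  have h_sqrt := right_ne_zero_of_mul (left_ne_zero_of_mul hn)
  field_simp

end Exceedance

lemma inv_pi_mul_integral_max_parabolicCap {a x y l₁ l₂ : ℝ} (ha : 0 < a) (hx : x < 0)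
    (hy : y < 0) (hl : l₁ ≠ l₂) :
    π⁻¹ * ∫ s, max (parabolicCap (-x) (2 * l₁) s) (parabolicCap (-y) (2 * l₂) s) ^ a =
      2 * Ialpha a *
        (|x| ^ (1 / 2 + a) *
            Upsilon a ((|l₁ - l₂| + (y - x) / (2 * |l₁ - l₂|)) / √(2 * |x|)) +
          |y| ^ (1 / 2 + a) *
            Upsilon a ((|l₁ - l₂| + (x - y) / (2 * |l₁ - l₂|)) / √(2 * |y|))) := by
  rw [integral_max_parabolicCap_rpow ha (neg_pos.2 hx) (neg_pos.2 hy)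
    (mt (mul_left_cancel₀ two_ne_zero) hl), ← mul_sub, abs_mul, abs_two,
    mul_div_cancel_left₀ _ two_ne_zero, neg_sub_neg, neg_sub_neg, abs_of_neg hx, abs_of_neg hy]
  field_simp

theorem maxima_skew_weibull_joint
{Ω : Type*} [MeasurableSpace Ω] (μ : Measure Ω) [IsProbabilityMeasure μ]
    (R Θ : Ω → ℝ) (hRm : Measurable R) (hΘm : Measurable Θ)
    (hRpos : ∀ᵐ ω ∂μ, 0 < R ω)
    (hΘunif : μ.map Θ = (ENNReal.ofReal (2 * π))⁻¹ • volume.restrict (Ioo (-π) π))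
    (hindep : IndepFun R Θ μ)
    (X Y : Ω → ℝ)
    (hX : X = fun ω => R ω * Real.cos (Θ ω))
    (hY : Y = fun ω => R ω * Real.sin (Θ ω))
    (F : ℝ → ℝ)
    (hF : F = fun x => (μ {ω | R ω ≤ x}).toReal)
    (hend1 : ∀ x < 1, F x < 1) (hend2 : ∀ x, 1 ≤ x → F x = 1)
    (α : ℝ) (hα : 0 < α)
    (hWeibull : ∀ x > 0, Tendsto (fun t => (1 - F (1 - t * x)) / (1 - F (1 - t)))
      (nhdsWithin 0 (Ioi 0)) (𝓝 (x ^ α)))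
    (u : ℕ → ℝ) (hupos : ∀ n, 0 < u n) (hudec : StrictAnti u)
    (hu0 : Tendsto u atTop (𝓝 0))
    (hun : Tendsto (fun n : ℕ => (n : ℝ) * Real.sqrt (u n) * (1 - F (1 - u n))) atTop (𝓝 1))
    (ρ₁ ρ₂ : ℕ → ℝ) (hρ₁ : ∀ n, ρ₁ n ∈ Ioc (0 : ℝ) 1) (hρ₂ : ∀ n, ρ₂ n ∈ Ioc (0 : ℝ) 1)
    (lam₁ lam₂ : ℝ) (hlam₁ : 0 ≤ lam₁) (hlam₂ : 0 ≤ lam₂)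
    (hHR₁ : Tendsto (fun n : ℕ => (1 - ρ₁ n) / u n) atTop (𝓝 (2 * lam₁ ^ 2)))
    (hHR₂ : Tendsto (fun n : ℕ => (1 - ρ₂ n) / u n) atTop (𝓝 (2 * lam₂ ^ 2)))
    (hne : 0 < |lam₁ - lam₂|) :
    ∀ x < (0 : ℝ), ∀ y < (0 : ℝ),
      Tendsto (fun n : ℕ =>
          ((μ {ω | ρ₁ n * |X ω| + Real.sqrt (1 - ρ₁ n ^ 2) * Y ω ≤ 1 + u n * x ∧
            ρ₂ n * |X ω| + Real.sqrt (1 - ρ₂ n ^ 2) * Y ω ≤ 1 + u n * y}).toReal) ^ n)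
        atTop (𝓝 (Real.exp (-(2 * Ialpha α *
          (|x| ^ (1 / 2 + α) *
              Upsilon α ((|lam₁ - lam₂| + (y - x) / (2 * |lam₁ - lam₂|)) / Real.sqrt (2 * |x|)) +
           |y| ^ (1 / 2 + α) *
              Upsilon α ((|lam₁ - lam₂| + (x - y) / (2 * |lam₁ - lam₂|)) /
                Real.sqrt (2 * |y|))))))) := by
  subst hX hY hF
  intro x hx y hy
  have hu : Tendsto u atTop (𝓝[>] 0) := tendsto_nhdsWithin_iff.2 ⟨hu0, .of_forall hupos⟩
  have hR_le : ∀ᵐ ω ∂μ, R ω ≤ 1 :=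
    (mem_ae_iff_prob_eq_one (measurableSet_le hRm measurable_const)).2
      ((ENNReal.toReal_eq_one_iff _).1 (hend2 1 le_rfl))
  simp only [← measureReal_def, one_sub_measureReal_le_one_sub hRm] at hWeibull hun ⊢
  have hconc₁ := isConcentrating_radialExcess_skewProjection hu
    (fun n => Ioc_subset_Icc_self (hρ₁ n)) hlam₁ hx.le hHR₁
  have hconc₂ := isConcentrating_radialExcess_skewProjection hu
    (fun n => Ioc_subset_Icc_self (hρ₂ n)) hlam₂ hy.le hHR₂
  have h_lim := tendsto_mul_measureReal_lt_of_isConcentrating (hRm.const_sub 1) hΘm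
    (hindep.comp (measurable_const_sub 1) measurable_id) hΘunif
    (hR_le.mono fun ω => sub_nonneg.2) hα hWeibull hu hun (fun n => by fun_prop)
    (fun n t => by simp only [periodic_skewProjection _ t])
    (fun n t => by simp only [skewProjection_pi_sub])
    (fun s => le_max_of_le_left (parabolicCap_nonneg _ _ s)) (hconc₁.sup (.of_forall hupos) hconc₂)
  rw [inv_pi_mul_integral_max_parabolicCap hα hx hy (sub_ne_zero.1 (abs_pos.1 hne))] at h_lim
  refine tendsto_pow_exp_neg_of_tendsto_mul_one_sub (h_lim.congr' ?_)
  filter_upwards [(tendsto_one_add_mul_const hu0 x).eventually_const_lt one_pos,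
    (tendsto_one_add_mul_const hu0 y).eventually_const_lt one_pos] with n hnx hny
  rw [one_sub_measureReal_margins_le hRm hΘm hRpos hR_le hnx hny]
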